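/- Let T ⊆ 𝔹 and let 𝔹_𝔭 be an orbit with T_𝔭 ≠ 𝔹_𝔭 and T̃_𝔭 = 𝔹_𝔭. Write T̃_𝔭 − T_𝔭 = {β₁, …, β_r} and set T′ = T ∪ {β₁}. Then every κ ∈ 𝒟_{T′} + ℚ^{≥0}·h_{β₁} satisfying L_{T,β_i}(κ) ≥ 0 for all 1 ≤ i ≤ r lies in 𝒟_T. -/

import Mathlib

/- Setting: `B` is the finite nonempty set 𝔹 equipped with a permutation `σ` (Frobenius),
and `p` is a prime.  Weights live in `ℚ^𝔹 = (B → ℚ)`.  The orbits `𝔹_𝔭` of `σ` are the sets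
`orbit σ β`, and for `T ⊆ 𝔹` we have `T_𝔭 = T ∩ orbit σ β`. -/

open scoped Classical

noncomputable section

namespace GO

variable {B : Type*} [Fintype B] [DecidableEq B]

/-- The standard basis vector `e_β` of `ℚ^𝔹`. -/
def e (β : B) : B → ℚ := fun τ => if τ = β then 1 else 0

/-- `β'` lies in the `σ`-orbit of `β`. -/
def sameOrbit (σ : Equiv.Perm B) (β β' : B) : Prop := ∃ n : ℕ, (σ ^ n) β = β'

/-- The `σ`-orbit `𝔹_𝔭` of `β`. -/
def orbit (σ : Equiv.Perm B) (β : B) : Set B := {τ | sameOrbit σ β τ}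

/-- `|𝔹_𝔭|`, the cardinality of the orbit of `β`. -/
def orbitCard (σ : Equiv.Perm B) (β : B) : ℕ := (orbit σ β).ncard

/-- For `β`, `β'` in the same orbit: the unique `n` with `0 < n ≤ |𝔹_𝔭|` and `σ^n β' = β`,
realized as the least positive `n` with `σ^n β' = β`. -/
def steps (σ : Equiv.Perm B) (β' β : B) : ℕ := sInf {n : ℕ | 0 < n ∧ (σ ^ n) β' = β}

/-- For `β`, `β'` in the same orbit: the unique `n` with `0 ≤ n < |𝔹_𝔭|` and `σ^n β = β'`. -/
def steps0 (σ : Equiv.Perm B) (β β' : B) : ℕ := sInf {n : ℕ | (σ ^ n) β = β'}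

/-- `h_β^{β'} = -e_β + p^n e_{β'}` where `β = σ^n β'` with `0 < n ≤ |𝔹_𝔭|`. -/
def hvec (σ : Equiv.Perm B) (p : ℕ) (β β' : B) : B → ℚ :=
  -(e β) + ((p : ℚ) ^ steps σ β' β) • e β'

/-- `b_β^{β'} = e_β + p^n e_{β'}` where `β = σ^n β'` with `0 < n ≤ |𝔹_𝔭|`. -/
def bvec (σ : Equiv.Perm B) (p : ℕ) (β β' : B) : B → ℚ :=
  (e β) + ((p : ℚ) ^ steps σ β' β) • e β'

/-- `h_β = -e_β + p e_{σ⁻¹ β}`. -/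
def hsimple (σ : Equiv.Perm B) (p : ℕ) (β : B) : B → ℚ := -(e β) + (p : ℚ) • e (σ⁻¹ β)

/-- `b_β = e_β + p e_{σ⁻¹ β}`. -/
def bsimple (σ : Equiv.Perm B) (p : ℕ) (β : B) : B → ℚ := (e β) + (p : ℚ) • e (σ⁻¹ β)

/-- The `ℚ^{≥0}`-cone generated by a set `S` of vectors: all finite nonnegative rational
linear combinations of elements of `S`. -/
def cone {V : Type*} [AddCommMonoid V] [Module ℚ V] (S : Set V) : Set V :=
  {x | ∃ (n : ℕ) (c : Fin n → ℚ) (v : Fin n → V),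
    (∀ i, 0 ≤ c i) ∧ (∀ i, v i ∈ S) ∧ x = ∑ i, c i • v i}

/-- A chain in `T` (automatically contained in a single orbit, so this is the notion of a
chain in `T_𝔭` for `T_𝔭 ⊊ 𝔹_𝔭`): `C = {σ^{-i}β : 0 ≤ i ≤ m} ⊆ T` with `σβ ∉ T` and
`σ^{-m-1}β ∉ T`. -/
def IsChainIn (σ : Equiv.Perm B) (T : Set B) (C : Set B) : Prop :=
  ∃ (β : B) (m : ℕ), σ β ∉ T ∧ (σ⁻¹ ^ (m + 1)) β ∉ T ∧
    (∀ i ≤ m, (σ⁻¹ ^ i) β ∈ T) ∧ C = {τ | ∃ i ≤ m, τ = (σ⁻¹ ^ i) β}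

/-- `C̃` for a chain `C`: equals `C` if `m` is odd (i.e. `|C| = m+1` is even), and
`C ∪ {σ^{-m-1}β} = C ∪ σ⁻¹(C)` if `m` is even (i.e. `|C|` odd). -/
def chainExt (σ : Equiv.Perm B) (C : Set B) : Set B :=
  if Odd C.ncard then C ∪ (⇑σ⁻¹ '' C) else C

/-- `T̃ = ⋃_𝔭 T̃_𝔭`: the union of `T` with the extensions `C̃` of all chains `C` in `T`.
(For orbits with `T_𝔭 = 𝔹_𝔭` there are no chains and `T̃_𝔭 = 𝔹_𝔭 = T_𝔭`.) -/
def tilde (σ : Equiv.Perm B) (T : Set B) : Set B :=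
  T ∪ ⋃ (C : Set B) (_ : IsChainIn σ T C), chainExt σ C

/-- `μ_β`: the least `i > 0` with `σ^i β ∉ T` if `T_𝔭 ≠ 𝔹_𝔭`, and `0` if `T_𝔭 = 𝔹_𝔭`. -/
def mu (σ : Equiv.Perm B) (T : Set B) (β : B) : ℕ :=
  if orbit σ β ⊆ T then 0 else sInf {i : ℕ | 0 < i ∧ (σ ^ i) β ∉ T}

/-- `n_β`: the least `i > 0` with `σ^i β ∉ T̃` (meaningful when `T̃_𝔭 ≠ 𝔹_𝔭`). -/
def nn (σ : Equiv.Perm B) (T : Set B) (β : B) : ℕ :=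
  sInf {i : ℕ | 0 < i ∧ (σ ^ i) β ∉ tilde σ T}

/-- `ν_β`: the least `i ≥ 0` with `σ^{-i} β ∉ T` (meaningful when `T_𝔭 ≠ 𝔹_𝔭`). -/
def nu (σ : Equiv.Perm B) (T : Set B) (β : B) : ℕ :=
  sInf {i : ℕ | (σ⁻¹ ^ i) β ∉ T}

/-- `𝒯(T_𝔭) = (𝔹_𝔭 − T̃_𝔭) ∪ σ(T̃_𝔭 − T_𝔭)`, taken globally (union over all `𝔭`). -/
def Tscr (σ : Equiv.Perm B) (T : Set B) : Set B :=
  (tilde σ T)ᶜ ∪ (⇑σ '' (tilde σ T \ T))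

/-- The generating set `⋃_𝔭 𝒢(T_𝔭)`:
`{h_β^{β'} : β ∈ ℋ(T_𝔭), β' ∈ 𝒯(T_𝔭)} ∪ {±b_β : β ∈ T_𝔭}` over all `𝔭`. -/
def Dgen (σ : Equiv.Perm B) (p : ℕ) (T : Set B) : Set (B → ℚ) :=
  {v | ∃ β β', β ∉ T ∧ β' ∈ Tscr σ T ∧ sameOrbit σ β β' ∧ v = hvec σ p β β'}
  ∪ {v | ∃ β ∈ T, v = bsimple σ p β ∨ v = -(bsimple σ p β)}

/-- The cone `𝒟_T`. -/
def D (σ : Equiv.Perm B) (p : ℕ) (T : Set B) : Set (B → ℚ) := cone (Dgen σ p T)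

/-- `h_{σ^{n_β}β}^{β} = -e_{σ^{n_β}β} + p^{n_β} e_β`. -/
def fH (σ : Equiv.Perm B) (p : ℕ) (T : Set B) (β : B) : B → ℚ :=
  -(e ((σ ^ nn σ T β) β)) + ((p : ℚ) ^ nn σ T β) • e β

/-- `b_{σ^{n_β}β}^{β} = e_{σ^{n_β}β} + p^{n_β} e_β`. -/
def fB (σ : Equiv.Perm B) (p : ℕ) (T : Set B) (β : B) : B → ℚ :=
  (e ((σ ^ nn σ T β) β)) + ((p : ℚ) ^ nn σ T β) • e β

/-- The generating set `⋃_𝔭 𝒢′(T_𝔭)`: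
if `𝔹_𝔭 − T̃_𝔭 ≠ ∅` it is `{h_{σ^{n_β}β}^β : β ∈ 𝔹_𝔭 − T̃_𝔭} ∪ {−b_{σ^{n_β}β}^β : β ∈ T̃_𝔭 − T_𝔭}
∪ {±b_β : β ∈ T_𝔭}`, and if `𝔹_𝔭 = T̃_𝔭` it is `{−e_β : β ∈ 𝔹_𝔭 − T_𝔭} ∪ {±b_β : β ∈ T_𝔭}`. -/
def D'gen (σ : Equiv.Perm B) (p : ℕ) (T : Set B) : Set (B → ℚ) :=
  {v | ∃ β, β ∉ tilde σ T ∧ v = fH σ p T β}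
  ∪ {v | ∃ β, β ∈ tilde σ T ∧ β ∉ T ∧ ¬ orbit σ β ⊆ tilde σ T ∧ v = -(fB σ p T β)}
  ∪ {v | ∃ β, β ∉ T ∧ orbit σ β ⊆ tilde σ T ∧ v = -(e β)}
  ∪ {v | ∃ β ∈ T, v = bsimple σ p β ∨ v = -(bsimple σ p β)}

/-- The cone `𝒟′_T`. -/
def D' (σ : Equiv.Perm B) (p : ℕ) (T : Set B) : Set (B → ℚ) := cone (D'gen σ p T)

/-- `f_β(T)` for `β ∉ T`: `h_{σ^{n_β}β}^β` if `β ∈ 𝔹_𝔭 − T̃_𝔭`; `−b_{σ^{n_β}β}^β` if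
`β ∈ T̃_𝔭 − T_𝔭` and `𝔹_𝔭 ≠ T̃_𝔭`; and `−(1+p^{|𝔹_𝔭|}) e_β` if `𝔹_𝔭 = T̃_𝔭`. -/
def fvec (σ : Equiv.Perm B) (p : ℕ) (T : Set B) (β : B) : B → ℚ :=
  if orbit σ β ⊆ tilde σ T then -((1 + (p : ℚ) ^ orbitCard σ β) • e β)
  else if β ∈ tilde σ T then -(fB σ p T β) else fH σ p T β

/-- `𝔹(T) = ⋃_𝔭 𝔹_𝔭(T)`: `β ∈ 𝔹(T)` iff `β ∉ T`, the set `𝔹_𝔭 − T̃_𝔭` is nonempty, and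
`𝔹_𝔭 − T̃_𝔭 ≠ {β}` (this encodes all three cases of the definition of `𝔹_𝔭(T)`). -/
def BT (σ : Equiv.Perm B) (T : Set B) : Set B :=
  {β | β ∉ T ∧ (orbit σ β \ tilde σ T).Nonempty ∧ orbit σ β \ tilde σ T ≠ {β}}

/-- The sign function `ε_T : 𝔹 → {−1,0,1}`. -/
def epsT (σ : Equiv.Perm B) (T : Set B) (β : B) : ℚ :=
  if orbit σ β ⊆ T then 0
  else if β ∈ tilde σ T then (-1 : ℚ) ^ (mu σ T β - 1) else 1

/-- `L^ε[β, β'](κ) = Σ_{0 ≤ i ≤ n} ε(σ^iβ) p^i k_{σ^iβ}`, where `β' = σ^n β` with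
`0 ≤ n < |𝔹_𝔭|`. -/
def Lfun (σ : Equiv.Perm B) (p : ℕ) (ε : B → ℚ) (β β' : B) (κ : B → ℚ) : ℚ :=
  ∑ i ∈ Finset.range (steps0 σ β β' + 1), ε ((σ ^ i) β) * (p : ℚ) ^ i * κ ((σ ^ i) β)

/-- `L^ε[β] = L^ε[β, σ⁻¹β]`. -/
def Lfun1 (σ : Equiv.Perm B) (p : ℕ) (ε : B → ℚ) (β : B) (κ : B → ℚ) : ℚ :=
  Lfun σ p ε β (σ⁻¹ β) κ

/-- `L_{T,β}` for `β ∈ 𝔹 − T`: `L^{ε_T}[σ^{μ_β}β]` if `β ∈ 𝔹 − T̃`, and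
`L^{ε_T}[β, σ^{μ_β−1}β]` if `β ∈ T̃ − T`. -/
def LT (σ : Equiv.Perm B) (p : ℕ) (T : Set B) (β : B) (κ : B → ℚ) : ℚ :=
  if β ∈ tilde σ T then Lfun σ p (epsT σ T) β ((σ ^ (mu σ T β - 1)) β) κ
  else Lfun1 σ p (epsT σ T) ((σ ^ mu σ T β) β) κ

/-- `ε_{T,f_β}`: negates `ε_T` on `{β, σβ, …, σ^{μ_β−1}β}`. -/
def epsTf (σ : Equiv.Perm B) (T : Set B) (β τ : B) : ℚ :=
  if ∃ i < mu σ T β, τ = (σ ^ i) β then -(epsT σ T τ) else epsT σ T τ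

/-- `L_{T,f_β,τ}` for `β ∈ 𝔹(T)` and `τ ∈ 𝔹 − (T ∪ {σ^{n_β}β})`, with `β′ = σ^{n_β}β` and
`β̃ = σ^{μ_{β′}}β′`. -/
def LTf (σ : Equiv.Perm B) (p : ℕ) (T : Set B) (β τ : B) (κ : B → ℚ) : ℚ :=
  if τ = β then
    (if β ∈ tilde σ T then
      Lfun1 σ p (epsTf σ T β) ((σ ^ mu σ T ((σ ^ nn σ T β) β)) ((σ ^ nn σ T β) β)) κ
    else
      Lfun σ p (epsTf σ T β) β (σ⁻¹ ((σ ^ mu σ T ((σ ^ nn σ T β) β)) ((σ ^ nn σ T β) β))) κ)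
  else
    (if τ ∈ tilde σ T then LT σ p T τ κ
     else Lfun1 σ p (epsTf σ T β) ((σ ^ mu σ T τ) τ) κ)

/-- `𝒟_{T,f_β} = {κ : L_{T,f_β,τ}(κ) ≥ 0 for all τ ∈ 𝔹 − (T ∪ {σ^{n_β}β})}`. -/
def Df (σ : Equiv.Perm B) (p : ℕ) (T : Set B) (β : B) : Set (B → ℚ) :=
  {κ | ∀ τ, τ ∉ T → τ ≠ (σ ^ nn σ T β) β → 0 ≤ LTf σ p T β τ κ}

/-- `i_T : ℚ^𝔹 → ℚ^{𝔹−T}`, the linear map with `i_T(e_β) = 0` if `T_𝔭 = 𝔹_𝔭` and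
`i_T(e_β) = (−p)^{ν_β} e_{σ^{−ν_β}β}` otherwise. -/
def iT (σ : Equiv.Perm B) (p : ℕ) (T : Set B) (κ : B → ℚ) : {β : B // β ∉ T} → ℚ :=
  fun β₀ => ∑ β : B, κ β *
    (if orbit σ β ⊆ T then 0
     else if (σ⁻¹ ^ nu σ T β) β = β₀.1 then (-(p : ℚ)) ^ nu σ T β else 0)

/-- Restriction to `ℚ^{𝔹−T}` of a vector of `ℚ^𝔹` (used for vectors supported on `𝔹 − T`). -/
def res (T : Set B) (v : B → ℚ) : {β : B // β ∉ T} → ℚ := fun β => v β.1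

/-- The generating set `𝒢^{T-red}(T) = ⋃_𝔭 𝒢_𝔭^{T-red}(T)` of the reduced cone. -/
def Gred (σ : Equiv.Perm B) (p : ℕ) (T : Set B) : Set ({β : B // β ∉ T} → ℚ) :=
  {v | ∃ β, β ∉ tilde σ T ∧ v = res T (fH σ p T β)}
  ∪ {v | ∃ β, β ∈ tilde σ T ∧ β ∉ T ∧ ¬ orbit σ β ⊆ tilde σ T ∧ v = res T (-(fB σ p T β))}
  ∪ {v | ∃ β, β ∉ T ∧ orbit σ β ⊆ tilde σ T ∧ v = res T (-(e β))}

/-- The minimal cone `𝒞^min_T = i_T(𝒟_T ∩ ⋂_{β ∈ 𝔹(T)} 𝒟_{T,f_β}) ⊆ ℚ^{𝔹−T}`. -/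
def Cmin (σ : Equiv.Perm B) (p : ℕ) (T : Set B) : Set ({β : B // β ∉ T} → ℚ) :=
  iT σ p T '' (D σ p T ∩ {κ | ∀ β ∈ BT σ T, κ ∈ Df σ p T β})

/-- `g_β`: `b_β` if `β ∈ T_𝔭`; `−e_β` if `β ∈ T̃_𝔭 − T_𝔭` and `𝔹_𝔭 = T̃_𝔭`;
`−b_{σ^{n_β}β}^β` if `β ∈ T̃_𝔭 − T_𝔭` and `𝔹_𝔭 ≠ T̃_𝔭`; `h_{σ^{n_β}β}^β` if `β ∈ 𝔹_𝔭 − T̃_𝔭`. -/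
def gvec (σ : Equiv.Perm B) (p : ℕ) (T : Set B) (β : B) : B → ℚ :=
  if β ∈ T then bsimple σ p β
  else if orbit σ β ⊆ tilde σ T then -(e β)
  else if β ∈ tilde σ T then -(fB σ p T β)
  else fH σ p T β

/-- The map `σ̄ : β ↦ σ^{n_β} β`. -/
def sigbar (σ : Equiv.Perm B) (T : Set B) (β : B) : B := (σ ^ nn σ T β) β

/-- `h_β = -e_β + p e_{σ⁻¹β}` as an element of `ℤ^𝔹`. -/
def hZ (σ : Equiv.Perm B) (p : ℕ) (β : B) : B → ℤ :=
  fun τ => (if τ = β then -1 else 0) + (if τ = σ⁻¹ β then (p : ℤ) else 0)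

end GO

end

/-!
Cut the orbit of `β₁` at the points outside `T`. Since the orbit lies in `T̃`, it becomes a disjoint
union of arcs `β, σβ, …, σ^{n-1}β` of even length `n = μ_β`, one for each `β ∉ T`, all of whose
points other than `β` lie in `T`. Modulo the vectors `b_τ`, `τ ∈ T`, which together with their
negatives lie in `𝒟_T`, one has `e_{σ^i β} ≡ (-p)^i e_β` along an arc. Hence the part of `κ`
supported on the arc is congruent to `L_{T,β}(κ) • (-e_β)`, and `-e_β ∈ 𝒟_T`. Off the orbit of `β₁`
the generators of `𝒟_T` and `𝒟_{T'}` are the same and `h_{β₁}` vanishes, so nothing changes there.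
-/

namespace GO

variable {B : Type*} {σ : Equiv.Perm B} {p : ℕ} {T T' P C : Set B} {b β β' : B} {i j n : ℕ}

theorem cone_eq_coe_hull {V : Type*} [AddCommMonoid V] [Module ℚ V] (S : Set V) :
    cone S = (PointedCone.hull ℚ S : Set V) := by
  ext x
  rw [SetLike.mem_coe, Submodule.mem_span_set']
  constructor
  · rintro ⟨n, c, v, hc, hv, rfl⟩
    exact ⟨n, fun i => ⟨c i, hc i⟩, fun i => ⟨v i, hv i⟩, rfl⟩
  · rintro ⟨n, c, v, rfl⟩
    exact ⟨n, fun i => c i, fun i => v i, fun i => (c i).2, fun i => (v i).2, rfl⟩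

section FirstExit

/-- The first positive time at which the forward `σ`-orbit of `β` is outside `T` is `n`. For
`β ∉ T` this says that `β` and `σ^n β` are consecutive points outside `T`, so that the points
strictly between them form a chain in `T`, empty if `n = 1`. -/
structure IsFirstExit (σ : Equiv.Perm B) (T : Set B) (β : B) (n : ℕ) : Prop where
  pos : 0 < n
  notMem : (σ ^ n) β ∉ T
  mem : ∀ i, 0 < i → i < n → (σ ^ i) β ∈ T

theorem IsFirstExit.pow_apply (h : IsFirstExit σ T β n) (hi : i < n) :
    IsFirstExit σ T ((σ ^ i) β) (n - i) where
  pos := by omega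
  notMem := by
    rw [← Equiv.Perm.mul_apply, ← pow_add, Nat.sub_add_cancel hi.le]
    exact h.notMem
  mem j hj hjn := by
    rw [← Equiv.Perm.mul_apply, ← pow_add]
    exact h.mem _ (by omega) (by omega)

theorem IsFirstExit.mu_eq (h : IsFirstExit σ T β n) : mu σ T β = n := by
  have not_subset : ¬ orbit σ β ⊆ T := fun hsub => h.notMem (hsub ⟨n, rfl⟩)
  rw [mu, if_neg not_subset]
  refine le_antisymm (Nat.sInf_le ⟨h.pos, h.notMem⟩) (le_csInf ⟨n, h.pos, h.notMem⟩ ?_)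
  rintro k ⟨hk, hkT⟩
  by_contra! hkn
  exact hkT (h.mem k hk hkn)

theorem IsFirstExit.eq_of_pow_apply_eq (h : IsFirstExit σ T β' n) (hβ : β ∉ T) (hij : i ≤ j)
    (hj : j < n) (heq : (σ ^ i) β = (σ ^ j) β') : i = j := by
  obtain ⟨d, rfl⟩ := Nat.exists_eq_add_of_le hij
  rw [pow_add, Equiv.Perm.mul_apply] at heq
  have hβ_eq : β = (σ ^ d) β' := (σ ^ i).injective heq
  by_contra hne
  exact hβ (hβ_eq ▸ h.mem d (by omega) (by omega))

theorem IsFirstExit.injOn_pow_apply (h : IsFirstExit σ T β n) (hβ : β ∉ T) :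
    Set.InjOn (fun i => (σ ^ i) β) (Set.Iio n) := by
  intro i hi j hj heq
  rcases le_total i j with hij | hji
  · exact h.eq_of_pow_apply_eq hβ hij hj heq
  · exact (h.eq_of_pow_apply_eq hβ hji hi heq.symm).symm

theorem IsFirstExit.steps0_pow_apply (h : IsFirstExit σ T β n) (hβ : β ∉ T) (hi : i < n) :
    steps0 σ β ((σ ^ i) β) = i := by
  have hle : steps0 σ β ((σ ^ i) β) ≤ i := Nat.sInf_le rfl
  have hmem : steps0 σ β ((σ ^ i) β) ∈ {k | (σ ^ k) β = (σ ^ i) β} := Nat.sInf_mem ⟨i, rfl⟩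
  exact h.eq_of_pow_apply_eq hβ hle hi hmem

end FirstExit

section Tilde

theorem inv_pow_apply_pow_apply {k : ℕ} (h : i + k = n) : (σ⁻¹ ^ i) ((σ ^ n) β) = (σ ^ k) β := by
  rw [← h, ← Equiv.Perm.mul_apply, pow_add, inv_pow, inv_mul_cancel_left]

theorem inv_apply_pow_succ_apply (σ : Equiv.Perm B) (i : ℕ) (β : B) :
    σ⁻¹ ((σ ^ (i + 1)) β) = (σ ^ i) β := by
  simpa only [pow_one] using inv_pow_apply_pow_apply (σ := σ) (β := β) (Nat.add_comm 1 i)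

theorem setOf_inv_pow_apply_eq_image_Ioo (σ : Equiv.Perm B) (β : B) (m : ℕ) :
    {τ | ∃ i ≤ m, τ = (σ⁻¹ ^ i) ((σ ^ (m + 1)) β)} =
      (fun i => (σ ^ i) β) '' Set.Ioo 0 (m + 2) := by
  ext τ
  constructor
  · rintro ⟨i, hi, rfl⟩
    exact ⟨m + 1 - i, ⟨by omega, by omega⟩, (inv_pow_apply_pow_apply (by omega)).symm⟩
  · rintro ⟨i, ⟨hi, him⟩, rfl⟩
    exact ⟨m + 1 - i, by omega, (inv_pow_apply_pow_apply (by omega)).symm⟩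

-- A chain `{σ^{-i}γ : 0 ≤ i ≤ m}` is read upwards from the point `β = σ^{-m-1}γ` below it.
theorem isChainIn_iff : IsChainIn σ T C ↔ ∃ β ∉ T, ∃ m, IsFirstExit σ T β (m + 2) ∧
    C = (fun i => (σ ^ i) β) '' Set.Ioo 0 (m + 2) := by
  constructor
  · rintro ⟨γ, m, htop, hbot, hmem, rfl⟩
    obtain ⟨β, rfl⟩ := (σ ^ (m + 1)).surjective γ
    rw [inv_pow_apply_pow_apply (add_zero _)] at hbot
    rw [← Equiv.Perm.mul_apply, ← pow_succ'] at htop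
    refine ⟨β, hbot, m, ⟨by omega, htop, fun i hi him => ?_⟩,
      setOf_inv_pow_apply_eq_image_Ioo σ β m⟩
    rw [← inv_pow_apply_pow_apply (i := m + 1 - i) (n := m + 1) (by omega)]
    exact hmem _ (by omega)
  · rintro ⟨β, hβ, m, h, rfl⟩
    refine ⟨(σ ^ (m + 1)) β, m, ?_, ?_, fun i hi => ?_,
      (setOf_inv_pow_apply_eq_image_Ioo σ β m).symm⟩
    · rw [← Equiv.Perm.mul_apply, ← pow_succ']
      exact h.notMem
    · rwa [inv_pow_apply_pow_apply (add_zero _)]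
    · rw [inv_pow_apply_pow_apply (k := m + 1 - i) (by omega)]
      exact h.mem _ (by omega) (by omega)

theorem IsFirstExit.ncard_image_Ioo (h : IsFirstExit σ T β n) (hβ : β ∉ T) :
    ((fun i => (σ ^ i) β) '' Set.Ioo 0 n).ncard = n - 1 := by
  rw [((h.injOn_pow_apply hβ).mono Set.Ioo_subset_Iio_self).ncard_image, Set.ncard_Ioo_nat,
    Nat.sub_zero]

theorem exists_even_isFirstExit (hβT : β ∉ T) (hβ : β ∈ tilde σ T) :
    ∃ n, Even n ∧ IsFirstExit σ T β n := by
  obtain ⟨C, hC, hβC⟩ : ∃ C, IsChainIn σ T C ∧ β ∈ chainExt σ C := by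
    simpa [tilde, hβT] using hβ
  obtain ⟨β₀, hβ₀, m, h, rfl⟩ := isChainIn_iff.1 hC
  have image_subset : (fun i => (σ ^ i) β₀) '' Set.Ioo 0 (m + 2) ⊆ T := by
    rintro _ ⟨i, ⟨hi, him⟩, rfl⟩
    exact h.mem i hi him
  rw [chainExt, h.ncard_image_Ioo hβ₀] at hβC
  split_ifs at hβC with hodd
  · obtain hβC | ⟨_, ⟨_ | i, ⟨hi, him⟩, rfl⟩, rfl⟩ := hβC
    · exact absurd (image_subset hβC) hβT
    · exact absurd hi (lt_irrefl 0)
    · rw [inv_apply_pow_succ_apply] at hβT ⊢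
      obtain rfl : i = 0 := by
        by_contra hi0
        exact hβT (h.mem i (by omega) (by omega))
      exact ⟨m + 2, by grind, h⟩
  · exact absurd (image_subset hβC) hβT

theorem IsFirstExit.mem_tilde (h : IsFirstExit σ T β n) (hn : Even n) : β ∈ tilde σ T := by
  by_cases hβ : β ∈ T
  · exact Or.inl hβ
  obtain ⟨m, rfl⟩ : ∃ m, n = m + 2 := ⟨n - 2, by have := h.pos; grind⟩
  refine Or.inr (Set.mem_iUnion₂.2 ⟨_, isChainIn_iff.2 ⟨β, hβ, m, h, rfl⟩, ?_⟩)
  rw [chainExt, h.ncard_image_Ioo hβ, if_pos (by grind)]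
  exact Or.inr ⟨σ β, ⟨1, ⟨by omega, by omega⟩, by simp⟩, by simp⟩

theorem mem_tilde_iff : β ∈ tilde σ T ↔ β ∈ T ∨ ∃ n, Even n ∧ IsFirstExit σ T β n := by
  refine ⟨fun h => or_iff_not_imp_left.2 fun hβ => exists_even_isFirstExit hβ h, ?_⟩
  rintro (hβ | ⟨n, hn, h⟩)
  exacts [Or.inl hβ, h.mem_tilde hn]

theorem isFirstExit_mu (hβ : β ∈ tilde σ T \ T) : IsFirstExit σ T β (mu σ T β) := by
  obtain ⟨n, -, h⟩ := exists_even_isFirstExit hβ.2 hβ.1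
  rwa [h.mu_eq]

theorem even_mu (hβ : β ∈ tilde σ T \ T) : Even (mu σ T β) := by
  obtain ⟨n, hn, h⟩ := exists_even_isFirstExit hβ.2 hβ.1
  rwa [h.mu_eq]

end Tilde

section Arc

/-- The arc `{β, σβ, …, σ^{μ_β-1}β}`. For `β ∉ T` these are the pieces of an orbit cut at its
points outside `T`, each piece starting with such a point. -/
def arc (σ : Equiv.Perm B) (T : Set B) (β : B) : Set B :=
  (fun i => (σ ^ i) β) '' Set.Iio (mu σ T β)

theorem pairwiseDisjoint_arc (σ : Equiv.Perm B) (T : Set B) :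
    (tilde σ T \ T).PairwiseDisjoint (arc σ T) := by
  have eq_of_le : ∀ β ∈ tilde σ T \ T, ∀ β' ∈ tilde σ T \ T, ∀ i j, i ≤ j → j < mu σ T β' →
      (σ ^ i) β = (σ ^ j) β' → β = β' := by
    intro β hβ β' hβ' i j hij hj heq
    obtain rfl := (isFirstExit_mu hβ').eq_of_pow_apply_eq hβ.2 hij hj heq
    exact (σ ^ i).injective heq
  intro β hβ β' hβ' hne
  refine Set.disjoint_left.2 ?_
  rintro _ ⟨i, hi, rfl⟩ ⟨j, hj, heq⟩
  rcases le_total i j with hij | hji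
  · exact hne (eq_of_le β hβ β' hβ' i j hij hj heq.symm)
  · exact hne (eq_of_le β' hβ' β hβ j i hji hi heq).symm

theorem pow_apply_mem_orbit (hβ : β ∈ orbit σ b) (i : ℕ) : (σ ^ i) β ∈ orbit σ b := by
  obtain ⟨k, rfl⟩ := hβ
  exact ⟨i + k, by rw [pow_add, Equiv.Perm.mul_apply]⟩

theorem biUnion_arc_eq_orbit (hb : b ∉ T) (hsub : orbit σ b ⊆ tilde σ T) :
    ⋃ β ∈ orbit σ b \ T, arc σ T β = orbit σ b := by
  have firstExit : ∀ β ∈ orbit σ b \ T, IsFirstExit σ T β (mu σ T β) := fun β hβ =>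
    isFirstExit_mu ⟨hsub hβ.1, hβ.2⟩
  refine Set.Subset.antisymm (Set.iUnion₂_subset ?_) ?_
  · rintro β hβ _ ⟨i, -, rfl⟩
    exact pow_apply_mem_orbit hβ.1 i
  · rintro _ ⟨k, rfl⟩
    rw [Set.mem_iUnion₂]
    induction k with
    | zero => exact ⟨b, ⟨⟨0, rfl⟩, hb⟩, 0, (firstExit b ⟨⟨0, rfl⟩, hb⟩).pos, rfl⟩
    | succ k ih =>
      obtain ⟨β, hβ, i, hi, heq⟩ := ih
      have step : (σ ^ (k + 1)) b = (σ ^ (i + 1)) β := by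
        rw [pow_succ', pow_succ', Equiv.Perm.mul_apply, Equiv.Perm.mul_apply, ← heq]
      obtain hlt | hend : i + 1 < mu σ T β ∨ i + 1 = mu σ T β := by
        rw [Set.mem_Iio] at hi
        omega
      · exact ⟨β, hβ, i + 1, hlt, step.symm⟩
      · have hnext : (σ ^ (k + 1)) b ∈ orbit σ b \ T := by
          refine ⟨⟨k + 1, rfl⟩, ?_⟩
          rw [step, hend]
          exact (firstExit β hβ).notMem
        exact ⟨_, hnext, 0, (firstExit _ hnext).pos, rfl⟩

end Arc

section Functional

theorem IsFirstExit.mem_tilde_of_lt (h : IsFirstExit σ T β n) (hβ : β ∈ tilde σ T) (hi : i < n) :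
    (σ ^ i) β ∈ tilde σ T := by
  obtain rfl | hpos := i.eq_zero_or_pos
  · exact hβ
  · exact Or.inl (h.mem i hpos hi)

theorem epsT_pow_apply (hβ : β ∈ tilde σ T \ T) (hi : i < mu σ T β) :
    epsT σ T ((σ ^ i) β) = -(-1) ^ i := by
  have h := isFirstExit_mu hβ
  have heven := even_mu hβ
  have not_subset : ¬ orbit σ ((σ ^ i) β) ⊆ T := fun hsub =>
    (h.pow_apply hi).notMem (hsub ⟨_, rfl⟩)
  rw [epsT, if_neg not_subset, if_pos (h.mem_tilde_of_lt hβ.1 hi), (h.pow_apply hi).mu_eq]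
  rcases i.even_or_odd with hi' | hi'
  · rw [hi'.neg_one_pow, Odd.neg_one_pow (by grind)]
  · rw [hi'.neg_one_pow, Even.neg_one_pow (by grind), neg_neg]

theorem LT_eq_neg_sum (p : ℕ) (hβ : β ∈ tilde σ T \ T) (κ : B → ℚ) :
    LT σ p T β κ = -∑ i ∈ Finset.range (mu σ T β), (-p : ℚ) ^ i * κ ((σ ^ i) β) := by
  have h := isFirstExit_mu hβ
  have hpos := h.pos
  rw [LT, if_pos hβ.1, Lfun, h.steps0_pow_apply hβ.2 (by omega), Nat.sub_add_cancel hpos,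
    ← Finset.sum_neg_distrib]
  refine Finset.sum_congr rfl fun i hi => ?_
  rw [epsT_pow_apply hβ (Finset.mem_range.1 hi), neg_pow (p : ℚ) i]
  ring

end Functional

section Cone

variable [DecidableEq B]

/-- The cone `𝒟_T` as a `PointedCone`. -/
abbrev DCone (σ : Equiv.Perm B) (p : ℕ) (T : Set B) : PointedCone ℚ (B → ℚ) :=
  PointedCone.hull ℚ (Dgen σ p T)

theorem mem_D_iff {v : B → ℚ} : v ∈ D σ p T ↔ v ∈ DCone σ p T := by
  rw [D, cone_eq_coe_hull, SetLike.mem_coe]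

theorem bsimple_mem_lineal (σ : Equiv.Perm B) (p : ℕ) (hβ : β ∈ T) :
    bsimple σ p β ∈ (DCone σ p T).lineal :=
  ⟨Submodule.subset_span (Or.inr ⟨β, hβ, Or.inl rfl⟩),
    Submodule.subset_span (Or.inr ⟨β, hβ, Or.inr rfl⟩)⟩

-- Add a multiple of `-b_{σβ}` to `h_β^{σβ}` so as to eliminate `e_{σβ}`.
theorem neg_e_mem_DCone (p : ℕ) (hβ : β ∈ tilde σ T \ T) (hσβ : σ β ∈ T) :
    -e β ∈ DCone σ p T := by
  have hvec_mem : hvec σ p β (σ β) ∈ DCone σ p T :=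
    Submodule.subset_span (Or.inl ⟨β, σ β, hβ.2, Or.inr ⟨β, hβ, rfl⟩, ⟨1, by simp⟩, rfl⟩)
  have neg_bsimple_mem : -bsimple σ p (σ β) ∈ DCone σ p T := (bsimple_mem_lineal σ p hσβ).2
  set n := steps σ (σ β) β with hn
  have combination : (1 + (p : ℚ) ^ (n + 1)) • -e β =
      hvec σ p β (σ β) + (p : ℚ) ^ n • -bsimple σ p (σ β) := by
    rw [hvec, bsimple, ← hn, show σ⁻¹ (σ β) = β from σ.symm_apply_apply β]
    module
  rw [← PointedCone.smul_mem_iff _ (c := 1 + (p : ℚ) ^ (n + 1)) (by positivity), combination]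
  exact add_mem hvec_mem (PointedCone.smul_mem _ (by positivity) neg_bsimple_mem)

theorem IsFirstExit.e_sub_smul_e_mem_lineal (p : ℕ) (h : IsFirstExit σ T β n) (hi : i < n) :
    e ((σ ^ i) β) - (-p : ℚ) ^ i • e β ∈ (DCone σ p T).lineal := by
  induction i with
  | zero => simp
  | succ i ih =>
    have hb := bsimple_mem_lineal σ p (h.mem (i + 1) i.succ_pos hi)
    have recursion : e ((σ ^ (i + 1)) β) - (-p : ℚ) ^ (i + 1) • e β =
        bsimple σ p ((σ ^ (i + 1)) β) + (-p : ℚ) • (e ((σ ^ i) β) - (-p : ℚ) ^ i • e β) := by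
      rw [bsimple, inv_apply_pow_succ_apply]
      module
    rw [recursion]
    exact add_mem hb (Submodule.smul_mem _ _ (ih (by omega)))

theorem indicator_eq_sum_smul_e (s : Finset B) (κ : B → ℚ) :
    (s : Set B).indicator κ = ∑ τ ∈ s, κ τ • e τ := by
  ext x
  simp [Set.indicator_apply, e]

theorem indicator_arc_eq_sum (hβ : β ∈ tilde σ T \ T) (κ : B → ℚ) :
    (arc σ T β).indicator κ =
      ∑ i ∈ Finset.range (mu σ T β), κ ((σ ^ i) β) • e ((σ ^ i) β) := by
  have arc_eq : arc σ T β = (Finset.range (mu σ T β)).image fun i => (σ ^ i) β := by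
    rw [Finset.coe_image, Finset.coe_range, arc]
  rw [arc_eq, indicator_eq_sum_smul_e, Finset.sum_image]
  rw [Finset.coe_range]
  exact (isFirstExit_mu hβ).injOn_pow_apply hβ.2

theorem indicator_arc_mem_DCone {κ : B → ℚ} (hβ : β ∈ tilde σ T \ T) (hL : 0 ≤ LT σ p T β κ) :
    (arc σ T β).indicator κ ∈ DCone σ p T := by
  have h := isFirstExit_mu hβ
  have one_lt_mu : 1 < mu σ T β := by
    have := h.pos
    have := even_mu hβ
    grind
  have hσβ : σ β ∈ T := h.mem 1 one_pos one_lt_mu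
  have decomposition : (arc σ T β).indicator κ = LT σ p T β κ • -e β +
      ∑ i ∈ Finset.range (mu σ T β),
        κ ((σ ^ i) β) • (e ((σ ^ i) β) - (-p : ℚ) ^ i • e β) := by
    rw [indicator_arc_eq_sum hβ, LT_eq_neg_sum p hβ, neg_smul_neg, Finset.sum_smul,
      ← Finset.sum_add_distrib]
    refine Finset.sum_congr rfl fun i _ => ?_
    module
  rw [decomposition]
  refine add_mem (PointedCone.smul_mem _ hL (neg_e_mem_DCone p hβ hσβ))
    (PointedCone.lineal_le _ (sum_mem fun i hi => ?_))
  exact Submodule.smul_mem _ _ (h.e_sub_smul_e_mem_lineal p (Finset.mem_range.1 hi))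

theorem indicator_orbit_mem_DCone {κ : B → ℚ} (hfin : (orbit σ b).Finite) (hb : b ∉ T)
    (hsub : orbit σ b ⊆ tilde σ T) (hL : ∀ β ∈ orbit σ b \ T, 0 ≤ LT σ p T β κ) :
    (orbit σ b).indicator κ ∈ DCone σ p T := by
  lift orbit σ b \ T to Finset B using hfin.sdiff with s hs
  have hst : ∀ β ∈ s, β ∈ tilde σ T \ T := fun β hβ => by
    rw [← Finset.mem_coe, hs] at hβ
    exact ⟨hsub hβ.1, hβ.2⟩
  have orbit_eq : orbit σ b = ⋃ β ∈ s, arc σ T β := by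
    rw [← biUnion_arc_eq_orbit hb hsub, ← hs]
    simp
  rw [orbit_eq, Finset.indicator_biUnion s _ ((pairwiseDisjoint_arc σ T).subset hst)]
  rw [← Finset.sum_fn]
  exact sum_mem fun β hβ => indicator_arc_mem_DCone (hst β hβ) (hL β hβ)

end Cone

section Locality

theorem pow_apply_mem_iff (hP : ∀ x, σ x ∈ P ↔ x ∈ P) (n : ℕ) (x : B) :
    (σ ^ n) x ∈ P ↔ x ∈ P := by
  induction n with
  | zero => rfl
  | succ n ih => rw [pow_succ', Equiv.Perm.mul_apply, hP, ih]

theorem inv_apply_mem_iff (hP : ∀ x, σ x ∈ P ↔ x ∈ P) (x : B) : σ⁻¹ x ∈ P ↔ x ∈ P := by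
  rw [← hP, show σ (σ⁻¹ x) = x from σ.apply_symm_apply x]

theorem apply_mem_orbit_iff (hfin : (orbit σ b).Finite) (x : B) :
    σ x ∈ orbit σ b ↔ x ∈ orbit σ b := by
  have mapsTo : Set.MapsTo σ (orbit σ b) (orbit σ b) := fun x hx => pow_apply_mem_orbit hx 1
  refine ⟨fun hx => ?_, fun hx => mapsTo hx⟩
  obtain ⟨y, hy, hyx⟩ := ((hfin.injOn_iff_bijOn_of_mapsTo mapsTo).1 σ.injective.injOn).surjOn hx
  rwa [← σ.injective hyx]

theorem IsFirstExit.congr (hP : ∀ x, σ x ∈ P ↔ x ∈ P) (hT : ∀ x ∉ P, x ∈ T ↔ x ∈ T')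
    (hβ : β ∉ P) (h : IsFirstExit σ T β n) : IsFirstExit σ T' β n := by
  have mem_iff : ∀ i, (σ ^ i) β ∈ T ↔ (σ ^ i) β ∈ T' := fun i =>
    hT _ (by rwa [pow_apply_mem_iff hP])
  exact ⟨h.pos, by rw [← mem_iff]; exact h.notMem, fun i hi hin => (mem_iff i).1 (h.mem i hi hin)⟩

theorem mem_tilde_congr (hP : ∀ x, σ x ∈ P ↔ x ∈ P) (hT : ∀ x ∉ P, x ∈ T ↔ x ∈ T')
    (hβ : β ∉ P) : β ∈ tilde σ T ↔ β ∈ tilde σ T' := by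
  have firstExit_iff : ∀ n, IsFirstExit σ T β n ↔ IsFirstExit σ T' β n := fun n =>
    ⟨.congr hP hT hβ, .congr hP (fun x hx => (hT x hx).symm) hβ⟩
  simp only [mem_tilde_iff, hT β hβ, firstExit_iff]

theorem mem_Tscr_congr (hP : ∀ x, σ x ∈ P ↔ x ∈ P) (hT : ∀ x ∉ P, x ∈ T ↔ x ∈ T')
    (hβ : β ∉ P) : β ∈ Tscr σ T ↔ β ∈ Tscr σ T' := by
  obtain ⟨γ, rfl⟩ := σ.surjective β
  have hγ : γ ∉ P := fun h => hβ ((hP γ).2 h)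
  simp [Tscr, mem_tilde_congr hP hT hβ, mem_tilde_congr hP hT hγ, hT γ hγ]

theorem mem_iff_mem_union_singleton_of_notMem_orbit {x : B} (hx : x ∉ orbit σ b) :
    x ∈ T ↔ x ∈ T ∪ {b} := by
  have hne : x ≠ b := fun h => hx ⟨0, h.symm⟩
  simp [hne]

variable [DecidableEq B]

theorem support_hvec_subset (σ : Equiv.Perm B) (p : ℕ) (β β' : B) :
    Function.support (hvec σ p β β') ⊆ {β, β'} := by
  intro x hx
  by_contra hne
  simp_all [hvec, e]

theorem support_bsimple_subset (σ : Equiv.Perm B) (p : ℕ) (β : B) :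
    Function.support (bsimple σ p β) ⊆ {β, σ⁻¹ β} := by
  intro x hx
  by_contra hne
  simp_all [bsimple, e]

theorem support_hsimple_subset (σ : Equiv.Perm B) (p : ℕ) (β : B) :
    Function.support (hsimple σ p β) ⊆ {β, σ⁻¹ β} := by
  intro x hx
  by_contra hne
  simp_all [hsimple, e]

theorem support_subset_or_mem_Dgen (hP : ∀ x, σ x ∈ P ↔ x ∈ P) (hT : ∀ x ∉ P, x ∈ T ↔ x ∈ T')
    {v : B → ℚ} (hv : v ∈ Dgen σ p T') :
    Function.support v ⊆ P ∨ Function.support v ⊆ Pᶜ ∧ v ∈ Dgen σ p T := by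
  rcases hv with ⟨β, β', hβ, hβ', horb, rfl⟩ | ⟨β, hβ, hv⟩
  · have hsupp := support_hvec_subset σ p β β'
    have hP' : β' ∈ P ↔ β ∈ P := by
      obtain ⟨k, rfl⟩ := horb
      exact pow_apply_mem_iff hP k β
    by_cases hβP : β ∈ P
    · exact .inl (hsupp.trans (Set.pair_subset hβP (hP'.2 hβP)))
    · have hβP' : β' ∉ P := fun h => hβP (hP'.1 h)
      exact .inr ⟨hsupp.trans (Set.pair_subset hβP hβP'), .inl ⟨β, β', by rwa [hT β hβP],
        (mem_Tscr_congr hP hT hβP').2 hβ', horb, rfl⟩⟩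
  · have hsupp : Function.support v ⊆ {β, σ⁻¹ β} := by
      rcases hv with rfl | rfl
      · exact support_bsimple_subset σ p β
      · rw [Function.support_neg]
        exact support_bsimple_subset σ p β
    by_cases hβP : β ∈ P
    · exact .inl (hsupp.trans (Set.pair_subset hβP ((inv_apply_mem_iff hP β).2 hβP)))
    · have hβP' : σ⁻¹ β ∉ P := fun h => hβP ((inv_apply_mem_iff hP β).1 h)
      exact .inr ⟨hsupp.trans (Set.pair_subset hβP hβP'), .inr ⟨β, (hT β hβP).2 hβ, hv⟩⟩

theorem indicator_compl_mem_DCone (hP : ∀ x, σ x ∈ P ↔ x ∈ P) (hT : ∀ x ∉ P, x ∈ T ↔ x ∈ T')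
    {v : B → ℚ} (hv : v ∈ DCone σ p T') : Pᶜ.indicator v ∈ DCone σ p T := by
  induction hv using Submodule.span_induction with
  | mem v hv =>
    rcases support_subset_or_mem_Dgen hP hT hv with hsupp | ⟨hsupp, hv⟩
    · rw [Set.indicator_eq_zero'.2 (Set.disjoint_compl_right_iff_subset.2 hsupp)]
      exact zero_mem _
    · rw [Set.indicator_eq_self.2 hsupp]
      exact Submodule.subset_span hv
  | zero =>
    rw [Set.indicator_zero']
    exact zero_mem _
  | add v w _ _ hv hw =>
    rw [Set.indicator_add']
    exact add_mem hv hw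
  | smul c v _ hv =>
    have indicator_smul : Pᶜ.indicator (c • v) = c • Pᶜ.indicator v :=
      Set.indicator_const_smul Pᶜ c v
    rw [indicator_smul]
    exact Submodule.smul_mem _ c hv

theorem eqOn_add_smul_hsimple (hfin : (orbit σ b).Finite) (p : ℕ) (y : B → ℚ) (c : ℚ) :
    Set.EqOn (y + c • hsimple σ p b) y (orbit σ b)ᶜ := by
  have self_mem : b ∈ orbit σ b := ⟨0, rfl⟩
  have support_subset : Function.support (hsimple σ p b) ⊆ orbit σ b :=
    (support_hsimple_subset σ p b).trans
      (Set.pair_subset self_mem ((inv_apply_mem_iff (apply_mem_orbit_iff hfin) b).2 self_mem))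
  intro x hx
  have hsimple_eq_zero : hsimple σ p b x = 0 := Function.notMem_support.1 fun h =>
    hx (support_subset h)
  simp [hsimple_eq_zero]

end Locality

end GO

theorem statement9_general {B : Type*} [DecidableEq B] {σ : Equiv.Perm B} {p : ℕ} {T T' : Set B}
    {b : B} (hfin : (GO.orbit σ b).Finite) (hb : b ∉ T) (hsub : GO.orbit σ b ⊆ GO.tilde σ T)
    (hT : ∀ x ∉ GO.orbit σ b, x ∈ T ↔ x ∈ T') {κ y : B → ℚ} (hy : y ∈ GO.D σ p T')
    (hκ : Set.EqOn κ y (GO.orbit σ b)ᶜ) (hL : ∀ β ∈ GO.orbit σ b \ T, 0 ≤ GO.LT σ p T β κ) :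
    κ ∈ GO.D σ p T := by
  rw [GO.mem_D_iff] at hy ⊢
  rw [← Set.indicator_self_add_compl (GO.orbit σ b) κ, Set.indicator_congr hκ]
  exact add_mem (GO.indicator_orbit_mem_DCone hfin hb hsub hL)
    (GO.indicator_compl_mem_DCone (GO.apply_mem_orbit_iff hfin) hT hy)

/-- let `𝔹_𝔭` be an orbit with `T_𝔭 ≠ 𝔹_𝔭` and `T̃_𝔭 = 𝔹_𝔭`, take
`β₁ ∈ T̃_𝔭 − T_𝔭` and `T′ = T ∪ {β₁}`.  Then every `κ ∈ 𝒟_{T′} + ℚ^{≥0}·h_{β₁}` with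
`L_{T,β_i}(κ) ≥ 0` for all `β_i ∈ T̃_𝔭 − T_𝔭` lies in `𝒟_T`. -/
theorem statement9 {B : Type*} [Fintype B] [DecidableEq B] [Nonempty B]
    (σ : Equiv.Perm B) (p : ℕ) (hp : p.Prime) (T : Set B) (β₁ : B)
    (h₁ : β₁ ∉ T) (h₂ : GO.orbit σ β₁ ⊆ GO.tilde σ T)
    (κ : B → ℚ)
    (hκ : ∃ y ∈ GO.D σ p (T ∪ {β₁}), ∃ c : ℚ, 0 ≤ c ∧ κ = y + c • GO.hsimple σ p β₁)
    (hL : ∀ τ ∈ GO.orbit σ β₁ \ T, 0 ≤ GO.LT σ p T τ κ) :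
    κ ∈ GO.D σ p T := by
  obtain ⟨y, hy, c, -, rfl⟩ := hκ
  have hfin : (GO.orbit σ β₁).Finite := Set.toFinite _
  exact statement9_general hfin h₁ h₂
    (fun _ => GO.mem_iff_mem_union_singleton_of_notMem_orbit) hy
    (GO.eqOn_add_smul_hsimple hfin p y c) hL
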